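/- Let λ, μ ∈ ℝ and let t : (1,2) → ℝ satisfy μ + t(r) ≥ c > 0 for all r ∈ (1,2) and some constant c. For r ∈ (1,2), let C(r) be the 2-dimensional elasticity tensor with residual stress whose Lamé parameters are λ, μ and whose residual stress matrix T(r) is symmetric with (2,2)-entry t(r), and let C̃(r) be the push-forward of C(r) by M(r) = diag(1/2, r/(2(r−1))). Then C̃(r)_{1212} = (r/(r−1))(μ + t(r)), and C̃(r)_{1212} tends to +∞ as r → 1⁺; i.e. the transformed cloaking tensor has a singular (blowing-up) entry at the inner cloaking interface. -/

import Mathlib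

/-- The Kronecker delta. -/
noncomputable def kron {N : ℕ} (i j : Fin N) : ℝ := if i = j then 1 else 0

/-- The elasticity tensor with residual stress:
`C_{ijkl} = λ δ_{ij} δ_{kl} + μ (δ_{ik} δ_{jl} + δ_{il} δ_{jk}) + t_{jl} δ_{ik}`. -/
noncomputable def resTensor {N : ℕ} (lam mu : ℝ) (T : Matrix (Fin N) (Fin N) ℝ) :
    Fin N → Fin N → Fin N → Fin N → ℝ :=
  fun i j k l =>
    lam * kron i j * kron k l + mu * (kron i k * kron j l + kron i l * kron j k)
      + T j l * kron i k

/-- The push-forward of a four-index tensor `C` by an invertible matrix `M`: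
`C̃_{iqkp} = (1/det M) Σ_{j,l} C_{ijkl} M_{pl} M_{qj}`. -/
noncomputable def pushForward {N : ℕ} (C : Fin N → Fin N → Fin N → Fin N → ℝ)
    (M : Matrix (Fin N) (Fin N) ℝ) : Fin N → Fin N → Fin N → Fin N → ℝ :=
  fun i q k p => (1 / M.det) * ∑ j, ∑ l, C i j k l * M p l * M q j

/-- The Jacobian `diag(1/2, r/(2(r−1)))` (in polar coordinates) of the singular cloaking
transformation `F₀(x) = (1 + |x|/2) x/|x|` in dimension 2. -/
noncomputable def cloakJac (r : ℝ) : Matrix (Fin 2) (Fin 2) ℝ :=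
  Matrix.diagonal ![1 / 2, r / (2 * (r - 1))]

/-!
Pushing a tensor forward by a diagonal matrix `diag(d)` only rescales its entries:
`C̃_{iqkp} = (d_p d_q / ∏ d) C_{iqkp}`. For the cloaking Jacobian the factor of the `1212` entry is
the ratio `r / (r - 1)` of the tangential to the radial stretch, which explodes at the inner
interface, whereas `C_{1212} = μ + t₂₂` stays bounded away from zero there.
-/

section Limits

open Filter Topology

theorem tendsto_mul_atTop_of_eventually_le {α 𝕜 : Type*} [Semifield 𝕜] [LinearOrder 𝕜]
    [IsStrictOrderedRing 𝕜] {l : Filter α} {f g : α → 𝕜} {c : 𝕜}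
    (hf : Tendsto f l atTop) (hc : 0 < c) (hg : ∀ᶠ x in l, c ≤ g x) :
    Tendsto (fun x => f x * g x) l atTop := by
  refine tendsto_atTop_mono' l ?_ (hf.atTop_mul_const hc)
  filter_upwards [hg, hf.eventually_ge_atTop 0] with x hgx hfx
  exact mul_le_mul_of_nonneg_left hgx hfx

theorem tendsto_sub_const_nhdsGT_zero {G : Type*} [AddGroup G] [Preorder G] [AddRightStrictMono G]
    [TopologicalSpace G] [ContinuousSub G] (a : G) :
    Tendsto (fun x => x - a) (𝓝[>] a) (𝓝[>] 0) := by
  have hcont : ContinuousWithinAt (fun x => x - a) (Set.Ioi a) a := by fun_prop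
  simpa only [sub_self] using hcont.tendsto_nhdsWithin (t := Set.Ioi (a - a)) fun _ hx =>
    sub_lt_sub_right (Set.mem_Ioi.mp hx) a

theorem tendsto_div_sub_const_nhdsGT_atTop {𝕜 : Type*} [Field 𝕜] [LinearOrder 𝕜]
    [IsStrictOrderedRing 𝕜] [TopologicalSpace 𝕜] [OrderTopology 𝕜] {a : 𝕜} (ha : 0 < a) :
    Tendsto (fun x => x / (x - a)) (𝓝[>] a) atTop := by
  have hinv : Tendsto (fun x => (x - a)⁻¹) (𝓝[>] a) atTop :=
    (tendsto_sub_const_nhdsGT_zero a).inv_tendsto_nhdsGT_zero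
  simpa only [div_eq_mul_inv, id_eq] using
    (tendsto_id.mono_left nhdsWithin_le_nhds).pos_mul_atTop ha hinv

end Limits

section Tensors

variable {N : ℕ}

theorem pushForward_diagonal (C : Fin N → Fin N → Fin N → Fin N → ℝ) (d : Fin N → ℝ)
    (i q k p : Fin N) :
    pushForward C (Matrix.diagonal d) i q k p = d p * d q / (∏ j, d j) * C i q k p := by
  simp only [pushForward, Matrix.det_diagonal, Matrix.diagonal_apply, mul_ite, mul_zero, ite_mul,
    zero_mul, Finset.sum_ite_irrel, Finset.sum_const_zero, Finset.sum_ite_eq, Finset.mem_univ,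
    if_true]
  ring

theorem resTensor_apply_of_ne (lam mu : ℝ) (T : Matrix (Fin N) (Fin N) ℝ) {i j : Fin N}
    (hij : i ≠ j) : resTensor lam mu T i j i j = mu + T j j := by
  simp [resTensor, kron, hij]

-- The convention `x / 0 = 0` makes this true even at `r = 0` and `r = 1`, where `cloakJac r` is
-- singular.
theorem pushForward_cloakJac_apply (C : Fin 2 → Fin 2 → Fin 2 → Fin 2 → ℝ) (r : ℝ) :
    pushForward C (cloakJac r) 0 1 0 1 = r / (r - 1) * C 0 1 0 1 := by
  have hstretch (d : ℝ) : d * d / (1 / 2 * d) = 2 * d := by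
    rw [mul_comm (1 / 2) d, ← div_div, mul_self_div_self]
    ring
  rw [cloakJac, pushForward_diagonal, Fin.prod_univ_two]
  simp only [Matrix.cons_val_zero, Matrix.cons_val_one]
  rw [hstretch, ← mul_div_assoc, mul_div_mul_left _ _ two_ne_zero]

theorem pushForward_resTensor_cloakJac_apply (lam mu : ℝ) (T : Matrix (Fin 2) (Fin 2) ℝ) (r : ℝ) :
    pushForward (resTensor lam mu T) (cloakJac r) 0 1 0 1 = r / (r - 1) * (mu + T 1 1) := by
  rw [pushForward_cloakJac_apply, resTensor_apply_of_ne lam mu T zero_ne_one]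

end Tensors

open Filter Topology in
theorem cloaking_tensor_blows_up_general (lam mu : ℝ) {c : ℝ} (hc : 0 < c)
    (T : ℝ → Matrix (Fin 2) (Fin 2) ℝ) (hT : ∀ᶠ r in 𝓝[>] 1, c ≤ mu + T r 1 1) :
    (∀ r > 1, pushForward (resTensor lam mu (T r)) (cloakJac r) 0 1 0 1
      = r / (r - 1) * (mu + T r 1 1)) ∧
    Tendsto (fun r => pushForward (resTensor lam mu (T r)) (cloakJac r) 0 1 0 1)
      (𝓝[>] 1) atTop := by
  refine ⟨fun r _ => pushForward_resTensor_cloakJac_apply lam mu (T r) r, ?_⟩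
  simp only [pushForward_resTensor_cloakJac_apply]
  exact tendsto_mul_atTop_of_eventually_le (tendsto_div_sub_const_nhdsGT_atTop one_pos) hc hT

/-- if `μ + t(r) ≥ c > 0` where `t(r) = T(r)₂₂`, then the transformed
cloaking tensor satisfies `C̃(r)₁₂₁₂ = (r/(r−1))(μ + t(r))`, and this entry blows up
to `+∞` as `r → 1⁺`. -/
theorem cloaking_tensor_blows_up (lam mu c : ℝ) (hc : 0 < c) (t : ℝ → ℝ)
    (ht : ∀ r ∈ Set.Ioo (1 : ℝ) 2, c ≤ mu + t r)
    (T : ℝ → Matrix (Fin 2) (Fin 2) ℝ)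
    (hTsymm : ∀ r, ∀ j l, T r j l = T r l j)
    (hT22 : ∀ r, T r 1 1 = t r) :
    (∀ r ∈ Set.Ioo (1 : ℝ) 2,
      pushForward (resTensor lam mu (T r)) (cloakJac r) 0 1 0 1
        = (r / (r - 1)) * (mu + t r)) ∧
    Filter.Tendsto
      (fun r => pushForward (resTensor lam mu (T r)) (cloakJac r) 0 1 0 1)
      (nhdsWithin 1 (Set.Ioo (1 : ℝ) 2)) Filter.atTop := by
  simp only [← hT22, nhdsWithin_Ioo_eq_nhdsGT (one_lt_two (α := ℝ))] at ht ⊢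
  have hT := Filter.mem_of_superset (Ioo_mem_nhdsGT one_lt_two) ht
  exact (cloaking_tensor_blows_up_general lam mu hc T hT).imp_left fun h r hr => h r hr.1
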